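/- arXiv:1612.08086 — 2 statements merged into one kernel-verified Lean document; each statement's English description precedes it below -/
import Mathlib

section
/- If f ∈ C⁶[−1,1] then there exists ξ ∈ [−1,1] such that ∫₋₁¹ f(t) dt = (1/2)[(5/9)f(−√15/5) + (8/9)f(0) + (5/9)f(√15/5)] + (1/2)[(1/6)f(−1) + (5/6)f(−√5/5) + (5/6)f(√5/5) + (1/6)f(1)] − f⁽⁶⁾(ξ)/94500. -/
/-! For a linear functional `E` that annihilates the polynomials of degree at most `n`, Taylor's
formula gives Peano's representation `E f = ∫ f⁽ⁿ⁺¹⁾(t) K(t) dt` with the kernel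
`K(t) = E ((· - t)₊ⁿ) / n!`. If `K` is nonnegative, the mean value theorem for integrals yields
`E f = f⁽ⁿ⁺¹⁾(ξ) ∫ K`, and the test function `x ↦ xⁿ⁺¹` identifies `∫ K = E (xⁿ⁺¹) / (n + 1)!`.
The Gauss and Lobatto rules have kernels of opposite signs, so everything rests on the positivity
of the average of these two kernels. This average is even, and it suffices to bound it below on
`[0, 1]`: its terms are nonnegative on `[1 / 2, 1]`, and on `[0, 1 / 2]` a polynomial minorant with
rational coefficients is positive. -/

section

open Set MeasureTheory intervalIntegral Polynomial
open scoped Nat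

variable {Q : ℝ →₀ ℝ} {a b t x : ℝ} {n : ℕ} {f g : ℝ → ℝ}

/-- The error of the quadrature rule `∫ x in a..b, f x ≈ ∑ x, Q x * f x`. A rule is encoded as the
finitely supported function `Q` sending each node to its weight. -/
noncomputable def quadratureError (Q : ℝ →₀ ℝ) (a b : ℝ) (f : ℝ → ℝ) : ℝ :=
  Finsupp.linearCombination ℝ f Q - ∫ x in a..b, f x

theorem quadratureError_congr (hab : a ≤ b) (hQ : Q ∈ Finsupp.supported ℝ ℝ (Icc a b))
    (hfg : EqOn f g (Icc a b)) : quadratureError Q a b f = quadratureError Q a b g := by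
  have hsum : Finsupp.linearCombination ℝ f Q = Finsupp.linearCombination ℝ g Q :=
    Finsupp.sum_congr fun x hx => by simp only [hfg (hQ hx)]
  have hint : ∫ x in a..b, f x = ∫ x in a..b, g x :=
    integral_congr fun x hx => hfg (uIcc_of_le hab ▸ hx)
  rw [quadratureError, quadratureError, hsum, hint]

theorem quadratureError_add (hf : IntervalIntegrable f volume a b)
    (hg : IntervalIntegrable g volume a b) :
    quadratureError Q a b (fun x => f x + g x) =
      quadratureError Q a b f + quadratureError Q a b g := by
  have hsum : Finsupp.linearCombination ℝ (fun x => f x + g x) Q =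
      Finsupp.linearCombination ℝ f Q + Finsupp.linearCombination ℝ g Q := by
    simp only [Finsupp.linearCombination_apply, smul_add, Finsupp.sum_add]
  rw [quadratureError, hsum, integral_add hf hg]
  exact add_sub_add_comm _ _ _ _

theorem quadratureError_const_mul (c : ℝ) (f : ℝ → ℝ) :
    quadratureError Q a b (fun x => c * f x) = c * quadratureError Q a b f := by
  have hsum : Finsupp.linearCombination ℝ (fun x => c * f x) Q =
      c * Finsupp.linearCombination ℝ f Q := by
    simp only [Finsupp.linearCombination_apply, Finsupp.mul_sum, smul_eq_mul, mul_left_comm]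
  rw [quadratureError, hsum, intervalIntegral.integral_const_mul, ← mul_sub, quadratureError]

theorem quadratureError_comp_neg (hQ : Q.mapDomain Neg.neg = Q) (f : ℝ → ℝ) :
    quadratureError Q (-b) b (fun x => f (-x)) = quadratureError Q (-b) b f := by
  have hsum : Finsupp.linearCombination ℝ (fun x => f (-x)) Q =
      Finsupp.linearCombination ℝ f Q := by
    conv_rhs => rw [← hQ, Finsupp.linearCombination_mapDomain]
    rfl
  rw [quadratureError, hsum, integral_comp_neg, neg_neg, quadratureError]

theorem quadratureError_intervalIntegral {c d : ℝ} {F : ℝ → ℝ → ℝ}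
    (hF : Continuous (Function.uncurry F)) :
    quadratureError Q a b (fun x => ∫ t in c..d, F x t) =
      ∫ t in c..d, quadratureError Q a b (F · t) := by
  have hnode (x : ℝ) : IntervalIntegrable (fun t => Q x * F x t) volume c d :=
    Continuous.intervalIntegrable (by fun_prop) c d
  have hsum : Continuous fun t => ∑ x ∈ Q.support, Q x * F x t := by fun_prop
  have hint : Continuous fun t => ∫ x in a..b, F x t :=
    continuous_parametric_intervalIntegral_of_continuous' (by fun_prop) a b
  have hswap : ∫ x in a..b, ∫ t in c..d, F x t = ∫ t in c..d, ∫ x in a..b, F x t :=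
    intervalIntegral_intervalIntegral_swap <|
      (hF.continuousOn.integrableOn_compact (isCompact_uIcc.prod isCompact_uIcc)).mono_set
        (prod_mono uIoc_subset_uIcc uIoc_subset_uIcc)
  simp only [quadratureError, Finsupp.linearCombination_apply, Finsupp.sum, smul_eq_mul]
  rw [integral_sub (hsum.intervalIntegrable c d) (hint.intervalIntegrable c d), hswap,
    integral_finsetSum fun x _ => hnode x]
  simp only [intervalIntegral.integral_const_mul]

/-- The rule `Q` on `[a, b]` has degree of exactness at least `n`: it integrates every
polynomial of degree at most `n` without error, which makes Peano's representation available. -/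
def IsExactOfDegree (Q : ℝ →₀ ℝ) (a b : ℝ) (n : ℕ) : Prop :=
  ∀ p : ℝ[X], p.natDegree ≤ n → quadratureError Q a b (fun x => p.eval x) = 0

theorem isExactOfDegree_of_pow (h : ∀ k ≤ n, quadratureError Q a b (· ^ k) = 0) :
    IsExactOfDegree Q a b n := by
  intro p hp
  refine induction_with_natDegree_le (fun p => quadratureError Q a b (fun x => p.eval x) = 0) n
    ?zero ?monomial ?add p hp
  case zero => simpa using quadratureError_const_mul (Q := Q) (a := a) (b := b) 0 0
  case monomial =>
    intro k c _ hk
    simp only [eval_mul, eval_C, eval_pow, eval_X, quadratureError_const_mul, h k hk, mul_zero]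
  case add =>
    intro p q _ _ hp hq
    simp only [eval_add]
    rw [quadratureError_add (p.continuous.intervalIntegrable a b)
      (q.continuous.intervalIntegrable a b), hp, hq, add_zero]

/-- The Peano kernel of order `n` of the rule `Q` on `[a, b]`: the error at the truncated power
`x ↦ (x - t)₊ ^ n / n!`. Only `n ≠ 0` is meaningful, since `0 ^ 0 = 1` makes `(x - t)₊ ^ 0`
constant. -/
noncomputable def peanoKernel (Q : ℝ →₀ ℝ) (a b : ℝ) (n : ℕ) (t : ℝ) : ℝ :=
  quadratureError Q a b (fun x => max (x - t) 0 ^ n) / n !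

theorem continuous_peanoKernel : Continuous (peanoKernel Q a b n) := by
  unfold peanoKernel quadratureError
  simp only [Finsupp.linearCombination_apply, Finsupp.sum]
  fun_prop

theorem max_zero_pow_eq_pow_add (hn : Odd n) (y : ℝ) : max y 0 ^ n = y ^ n + max (-y) 0 ^ n := by
  rcases le_total y 0 with h | h
  · rw [max_eq_right h, max_eq_left (neg_nonneg.2 h), hn.neg_pow, zero_pow hn.pos.ne',
      add_neg_cancel]
  · rw [max_eq_left h, max_eq_right (neg_nonpos.2 h), zero_pow hn.pos.ne', add_zero]

theorem peanoKernel_neg (hn : Odd n) (hQ : Q.mapDomain Neg.neg = Q)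
    (hexact : IsExactOfDegree Q (-b) b n) (t : ℝ) :
    peanoKernel Q (-b) b n (-t) = peanoKernel Q (-b) b n t := by
  have hpoly : quadratureError Q (-b) b (fun x => (x + t) ^ n) = 0 := by
    have h := hexact ((X + C t) ^ n) (by compute_degree)
    simpa only [eval_pow, eval_add, eval_X, eval_C] using h
  have hsplit (x : ℝ) : max (x - -t) 0 ^ n = (x + t) ^ n + max (-x - t) 0 ^ n := by
    rw [sub_neg_eq_add, max_zero_pow_eq_pow_add hn, neg_add']
  simp only [peanoKernel, hsplit]
  rw [quadratureError_add (Continuous.intervalIntegrable (by fun_prop) _ _)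
    (Continuous.intervalIntegrable (by fun_prop) _ _), hpoly, zero_add,
    quadratureError_comp_neg hQ fun x => max (x - t) 0 ^ n]

theorem integral_mul_max_sub_pow (hn : n ≠ 0) (hg : ContinuousOn g (Icc a b))
    (hx : x ∈ Icc a b) :
    ∫ t in a..b, g t * max (x - t) 0 ^ n = ∫ t in a..x, g t * (x - t) ^ n := by
  have hab : a ≤ b := hx.1.trans hx.2
  have hi {c d : ℝ} (hc : c ∈ Icc a b) (hd : d ∈ Icc a b) :
      IntervalIntegrable (fun t => g t * max (x - t) 0 ^ n) volume c d :=
    ((hg.mono (uIcc_subset_Icc hc hd)).mul (by fun_prop)).intervalIntegrable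
  have hleft : ∫ t in a..x, g t * max (x - t) 0 ^ n = ∫ t in a..x, g t * (x - t) ^ n := by
    refine integral_congr fun t ht => ?_
    rw [uIcc_of_le hx.1] at ht
    simp only [max_eq_left (sub_nonneg.2 ht.2)]
  have hright : ∫ t in x..b, g t * max (x - t) 0 ^ n = 0 := by
    refine (integral_congr fun t ht => ?_).trans intervalIntegral.integral_zero
    rw [uIcc_of_le hx.2] at ht
    simp only [max_eq_right (sub_nonpos.2 ht.1), zero_pow hn, mul_zero]
  rw [← integral_add_adjacent_intervals (hi (left_mem_Icc.2 hab) hx) (hi hx (right_mem_Icc.2 hab)),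
    hleft, hright, add_zero]

theorem integral_max_sub_pow (hn : n ≠ 0) (ht : t ∈ Icc a b) :
    ∫ x in a..b, max (x - t) 0 ^ n = (b - t) ^ (n + 1) / (n + 1) := by
  have hi (c d : ℝ) : IntervalIntegrable (fun x => max (x - t) 0 ^ n) volume c d :=
    Continuous.intervalIntegrable (by fun_prop) c d
  have hleft : ∫ x in a..t, max (x - t) 0 ^ n = 0 := by
    refine (integral_congr fun x hx => ?_).trans intervalIntegral.integral_zero
    rw [uIcc_of_le ht.1] at hx
    simp only [max_eq_right (sub_nonpos.2 hx.2), zero_pow hn]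
  have hright : ∫ x in t..b, max (x - t) 0 ^ n = ∫ x in t..b, (x - t) ^ n := by
    refine integral_congr fun x hx => ?_
    rw [uIcc_of_le ht.2] at hx
    simp only [max_eq_left (sub_nonneg.2 hx.1)]
  rw [← integral_add_adjacent_intervals (hi a t) (hi t b), hleft, hright, zero_add,
    integral_comp_sub_right (· ^ n), integral_pow, sub_self, zero_pow n.succ_ne_zero, sub_zero]

theorem iteratedDerivWithin_Icc_eq_of_le (hf : ContDiffOn ℝ n f (Icc a b)) (hax : a < x)
    (hxb : x ≤ b) (ht : t ∈ Icc a x) :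
    iteratedDerivWithin n f (Icc a x) t = iteratedDerivWithin n f (Icc a b) t := by
  rw [iteratedDerivWithin, iteratedDerivWithin,
    iteratedFDerivWithin_subset (Icc_subset_Icc_right hxb) (uniqueDiffOn_Icc hax)
      (uniqueDiffOn_Icc (hax.trans_le hxb)) hf ht]

theorem eq_taylorWithinEval_add_integral_max_sub_pow (hn : n ≠ 0) (hab : a < b)
    (hf : ContDiffOn ℝ (n + 1 : ℕ) f (Icc a b)) (hx : x ∈ Icc a b) :
    f x = taylorWithinEval f n (Icc a b) a x +
      ∫ t in a..b, iteratedDerivWithin (n + 1) f (Icc a b) t * (max (x - t) 0 ^ n / n !) := by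
  have hD : ContinuousOn (iteratedDerivWithin (n + 1) f (Icc a b)) (Icc a b) :=
    hf.continuousOn_iteratedDerivWithin le_rfl (uniqueDiffOn_Icc hab)
  have htrunc :
      ∫ t in a..b, iteratedDerivWithin (n + 1) f (Icc a b) t * (max (x - t) 0 ^ n / n !) =
        ∫ t in a..x, iteratedDerivWithin (n + 1) f (Icc a b) t * ((x - t) ^ n / n !) := by
    simp only [mul_div_assoc', intervalIntegral.integral_div, integral_mul_max_sub_pow hn hD hx]
  rw [htrunc]
  obtain rfl | hax := hx.1.eq_or_lt
  · simp only [taylorWithinEval_self, integral_same, add_zero]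
  have hderiv {k : ℕ} (hk : k ≤ n + 1) {t : ℝ} (ht : t ∈ Icc a x) :
      iteratedDerivWithin k f (Icc a x) t = iteratedDerivWithin k f (Icc a b) t :=
    iteratedDerivWithin_Icc_eq_of_le (hf.of_le (by exact_mod_cast hk)) hax hx.2 ht
  have hpoly : taylorWithinEval f n (Icc a x) a x = taylorWithinEval f n (Icc a b) a x := by
    simp only [taylor_within_apply]
    refine Finset.sum_congr rfl fun k hk => ?_
    rw [hderiv (Finset.mem_range.1 hk).le (left_mem_Icc.2 hax.le)]
  have htaylor := taylor_integral_remainder (x₀ := a) (x := x) (n := n)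
    ((uIcc_of_le hax.le).symm ▸ hf.mono (Icc_subset_Icc_right hx.2))
  rw [uIcc_of_le hax.le, hpoly, sub_eq_iff_eq_add'] at htaylor
  rw [htaylor]
  congr 1
  refine integral_congr fun t ht => ?_
  simp only [smul_eq_mul]
  rw [hderiv le_rfl (uIcc_of_le hax.le ▸ ht), mul_comm]

theorem IsExactOfDegree.quadratureError_taylorWithinEval (hexact : IsExactOfDegree Q a b n)
    (f : ℝ → ℝ) (s : Set ℝ) (x₀ : ℝ) :
    quadratureError Q a b (taylorWithinEval f n s x₀) = 0 := by
  let p : ℝ[X] := ∑ k ∈ Finset.range (n + 1),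
    C ((k ! : ℝ)⁻¹ * iteratedDerivWithin k f s x₀) * (X - C x₀) ^ k
  have hp : p.natDegree ≤ n := natDegree_sum_le_of_forall_le _ _ fun k hk => by
    have hk : k ≤ n := Nat.lt_succ_iff.1 (Finset.mem_range.1 hk)
    exact (natDegree_C_mul_le _ _).trans (by simpa using hk)
  have heval : taylorWithinEval f n s x₀ = fun x => p.eval x := by
    ext x
    simp only [taylor_within_apply, p, eval_finsetSum, eval_mul, eval_C, eval_pow, eval_sub, eval_X,
      smul_eq_mul]
    exact Finset.sum_congr rfl fun k _ => by ring
  rw [heval, hexact p hp]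

theorem IsExactOfDegree.quadratureError_eq_integral_mul_peanoKernel
    (hexact : IsExactOfDegree Q a b n) (hn : n ≠ 0) (hab : a < b)
    (hQ : Q ∈ Finsupp.supported ℝ ℝ (Icc a b)) (hf : ContDiffOn ℝ (n + 1 : ℕ) f (Icc a b)) :
    quadratureError Q a b f =
      ∫ t in a..b, iteratedDerivWithin (n + 1) f (Icc a b) t * peanoKernel Q a b n t := by
  have hD : ContinuousOn (iteratedDerivWithin (n + 1) f (Icc a b)) (Icc a b) :=
    hf.continuousOn_iteratedDerivWithin le_rfl (uniqueDiffOn_Icc hab)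
  -- Fubini is applied to a continuous extension of the derivative to all of `ℝ`.
  obtain ⟨G, hG, hGD⟩ : ∃ G : ℝ → ℝ, Continuous G ∧
      EqOn G (iteratedDerivWithin (n + 1) f (Icc a b)) (Icc a b) :=
    ⟨IccExtend hab.le ((Icc a b).domRestrict (iteratedDerivWithin (n + 1) f (Icc a b))),
      hD.domRestrict.Icc_extend', fun t ht => IccExtend_of_mem hab.le _ ht⟩
  have hGint (w : ℝ → ℝ) : ∫ t in a..b, iteratedDerivWithin (n + 1) f (Icc a b) t * w t =
      ∫ t in a..b, G t * w t :=
    integral_congr fun t ht => by simp only [hGD (uIcc_of_le hab.le ▸ ht)]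
  have hT : Continuous (taylorWithinEval f n (Icc a b) a) := by
    simp only [funext fun x => taylor_within_apply f n (Icc a b) a x]
    fun_prop
  have hR : Continuous fun x => ∫ t in a..b, G t * (max (x - t) 0 ^ n / n !) :=
    continuous_parametric_intervalIntegral_of_continuous' (by fun_prop) a b
  calc quadratureError Q a b f
      = quadratureError Q a b (fun x => taylorWithinEval f n (Icc a b) a x +
          ∫ t in a..b, G t * (max (x - t) 0 ^ n / n !)) :=
        quadratureError_congr hab.le hQ fun x hx => by
          rw [eq_taylorWithinEval_add_integral_max_sub_pow hn hab hf hx, hGint]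
    _ = quadratureError Q a b (fun x => ∫ t in a..b, G t * (max (x - t) 0 ^ n / n !)) := by
        rw [quadratureError_add (hT.intervalIntegrable a b) (hR.intervalIntegrable a b),
          hexact.quadratureError_taylorWithinEval, zero_add]
    _ = ∫ t in a..b, quadratureError Q a b (fun x => G t * (max (x - t) 0 ^ n / n !)) :=
        quadratureError_intervalIntegral (by fun_prop)
    _ = ∫ t in a..b, G t * peanoKernel Q a b n t := by
        simp only [peanoKernel, div_eq_inv_mul, quadratureError_const_mul]
    _ = _ := (hGint _).symm

theorem iteratedDerivWithin_pow_self (hab : a < b) (ht : t ∈ Icc a b) (n : ℕ) :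
    iteratedDerivWithin n (· ^ n : ℝ → ℝ) (Icc a b) t = n ! := by
  rw [iteratedDerivWithin_eq_iteratedDeriv (uniqueDiffOn_Icc hab) (by fun_prop) ht,
    iteratedDeriv_eq_iterate, iter_deriv_pow, ← descPochhammer_eval_eq_prod_range,
    descPochhammer_eval_eq_descFactorial, Nat.descFactorial_self, Nat.sub_self, pow_zero, mul_one]

theorem IsExactOfDegree.integral_peanoKernel (hexact : IsExactOfDegree Q a b n) (hn : n ≠ 0)
    (hab : a < b) (hQ : Q ∈ Finsupp.supported ℝ ℝ (Icc a b)) :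
    ∫ t in a..b, peanoKernel Q a b n t = quadratureError Q a b (· ^ (n + 1)) / (n + 1)! := by
  have hpow : quadratureError Q a b (· ^ (n + 1)) =
      ∫ t in a..b, ((n + 1)! : ℝ) * peanoKernel Q a b n t := by
    rw [hexact.quadratureError_eq_integral_mul_peanoKernel hn hab hQ (by fun_prop)]
    refine integral_congr fun t ht => ?_
    simp only [iteratedDerivWithin_pow_self hab (uIcc_of_le hab.le ▸ ht)]
  rw [hpow, intervalIntegral.integral_const_mul, mul_div_cancel_left₀ _ (by positivity)]

theorem IsExactOfDegree.exists_quadratureError_eq_iteratedDerivWithin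
    (hexact : IsExactOfDegree Q a b n) (hn : n ≠ 0) (hab : a < b)
    (hQ : Q ∈ Finsupp.supported ℝ ℝ (Icc a b)) (hK : ∀ t ∈ Icc a b, 0 ≤ peanoKernel Q a b n t)
    (hf : ContDiffOn ℝ (n + 1 : ℕ) f (Icc a b)) :
    ∃ ξ ∈ Icc a b, quadratureError Q a b f = iteratedDerivWithin (n + 1) f (Icc a b) ξ *
      (quadratureError Q a b (· ^ (n + 1)) / (n + 1)!) := by
  have huIcc : uIcc a b = Icc a b := uIcc_of_le hab.le
  obtain ⟨ξ, hξ, hmean⟩ := exists_eq_const_mul_intervalIntegral_of_nonneg (μ := volume)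
    (f := iteratedDerivWithin (n + 1) f (Icc a b))
    (huIcc.symm ▸ hf.continuousOn_iteratedDerivWithin le_rfl (uniqueDiffOn_Icc hab))
    (continuous_peanoKernel.intervalIntegrable a b)
    fun t ht => hK t (huIcc ▸ uIoc_subset_uIcc ht)
  refine ⟨ξ, huIcc ▸ hξ, ?_⟩
  rw [hexact.quadratureError_eq_integral_mul_peanoKernel hn hab hQ hf, hmean,
    hexact.integral_peanoKernel hn hab hQ]

/-- The three-point Gauss–Legendre rule on `[-1, 1]`, encoded by its weights. -/
noncomputable def gaussThree : ℝ →₀ ℝ :=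
  .single (-√15 / 5) (5 / 9) + .single 0 (8 / 9) + .single (√15 / 5) (5 / 9)

/-- The four-point Lobatto rule on `[-1, 1]`, encoded by its weights. -/
noncomputable def lobattoFour : ℝ →₀ ℝ :=
  .single (-1) (1 / 6) + .single (-√5 / 5) (5 / 6) + .single (√5 / 5) (5 / 6) + .single 1 (1 / 6)

/-- The quadrature rule of the theorem: the average of `gaussThree` and `lobattoFour`. -/
noncomputable def gaussLobatto : ℝ →₀ ℝ := (1 / 2 : ℝ) • (gaussThree + lobattoFour)

theorem linearCombination_gaussLobatto (f : ℝ → ℝ) :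
    Finsupp.linearCombination ℝ f gaussLobatto =
      1 / 2 * (5 / 9 * f (-√15 / 5) + 8 / 9 * f 0 + 5 / 9 * f (√15 / 5)) +
        1 / 2 * (1 / 6 * f (-1) + 5 / 6 * f (-√5 / 5) + 5 / 6 * f (√5 / 5) + 1 / 6 * f 1) := by
  simp only [gaussLobatto, gaussThree, lobattoFour, map_smul, map_add,
    Finsupp.linearCombination_single, smul_eq_mul, mul_add]

theorem mapDomain_neg_gaussLobatto : gaussLobatto.mapDomain Neg.neg = gaussLobatto := by
  simp only [gaussLobatto, gaussThree, lobattoFour, Finsupp.mapDomain_smul, Finsupp.mapDomain_add,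
    Finsupp.mapDomain_single, neg_div, neg_neg, neg_zero]
  module

theorem gaussLobatto_mem_supported : gaussLobatto ∈ Finsupp.supported ℝ ℝ (Icc (-1) 1) := by
  have hsqrt {c : ℝ} (hc : c ≤ 5 ^ 2) : √c ≤ 5 := (Real.sqrt_le_left (by norm_num)).2 hc
  have h₁₅ : √15 ≤ 5 := hsqrt (by norm_num)
  have h₅ : √5 ≤ 5 := hsqrt (by norm_num)
  have hsingle {x : ℝ} (w : ℝ) (hl : -1 ≤ x) (hr : x ≤ 1) :
      Finsupp.single x w ∈ Finsupp.supported ℝ ℝ (Icc (-1) 1) :=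
    Finsupp.single_mem_supported ℝ w ⟨hl, hr⟩
  unfold gaussLobatto gaussThree lobattoFour
  refine Submodule.smul_mem _ _ ?_
  repeat' apply Submodule.add_mem
  all_goals apply hsingle <;> linarith [Real.sqrt_nonneg 15, Real.sqrt_nonneg 5]

theorem sqrt_pow_two_mul {c : ℝ} (hc : 0 ≤ c) (k : ℕ) : √c ^ (2 * k) = c ^ k := by
  rw [pow_mul, Real.sq_sqrt hc]

theorem isExactOfDegree_gaussLobatto : IsExactOfDegree gaussLobatto (-1) 1 5 := by
  have hsq₁₅ : √15 ^ 2 = 15 := Real.sq_sqrt (by norm_num)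
  have hsq₅ : √5 ^ 2 = 5 := Real.sq_sqrt (by norm_num)
  have hfourth₁₅ : √15 ^ 4 = 15 ^ 2 := sqrt_pow_two_mul (by norm_num) 2
  have hfourth₅ : √5 ^ 4 = 5 ^ 2 := sqrt_pow_two_mul (by norm_num) 2
  refine isExactOfDegree_of_pow fun k hk => ?_
  rw [quadratureError, linearCombination_gaussLobatto, integral_pow]
  interval_cases k <;> ring_nf <;> norm_num [hsq₁₅, hsq₅, hfourth₁₅, hfourth₅]

theorem quadratureError_gaussLobatto_pow_six :
    quadratureError gaussLobatto (-1) 1 (· ^ 6) = 4 / 525 := by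
  have h₁₅ : √15 ^ 6 = 15 ^ 3 := sqrt_pow_two_mul (by norm_num) 3
  have h₅ : √5 ^ 6 = 5 ^ 3 := sqrt_pow_two_mul (by norm_num) 3
  rw [quadratureError, linearCombination_gaussLobatto, integral_pow]
  simp only [div_pow, Even.neg_pow (by decide : Even 6), h₁₅, h₅]
  norm_num

theorem peanoKernel_gaussLobatto (ht : t ∈ Icc (0 : ℝ) 1) :
    720 * peanoKernel gaussLobatto (-1) 1 5 t =
      5 / 3 * max (√15 / 5 - t) 0 ^ 5 + 5 / 2 * max (√5 / 5 - t) 0 ^ 5 +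
        (1 - t) ^ 5 * (t - 1 / 2) := by
  have hfact : (5 ! : ℝ) = 120 := by norm_num [Nat.factorial]
  have h₁ : max (-√15 / 5 - t) 0 = 0 := max_eq_right (by linarith [ht.1, Real.sqrt_nonneg 15])
  have h₂ : max (-√5 / 5 - t) 0 = 0 := max_eq_right (by linarith [ht.1, Real.sqrt_nonneg 5])
  have h₃ : max (0 - t) 0 = 0 := max_eq_right (by linarith [ht.1])
  have h₄ : max (-1 - t) 0 = 0 := max_eq_right (by linarith [ht.1])
  have h₅ : max (1 - t) 0 = 1 - t := max_eq_left (by linarith [ht.2])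
  rw [peanoKernel, quadratureError, linearCombination_gaussLobatto,
    integral_max_sub_pow (by norm_num) ⟨by linarith [ht.1], ht.2⟩, h₁, h₂, h₃, h₄, h₅, hfact]
  push_cast
  ring

-- The numbers `17 / 22` and `4 / 9` are rational lower bounds for the nodes `√15 / 5` and `√5 / 5`.
theorem peanoKernel_gaussLobatto_minorant_nonneg (ht : t ∈ Icc (0 : ℝ) (1 / 2)) :
    0 ≤ 5 / 3 * (17 / 22 - t) ^ 5 + 5 / 2 * (4 / 9 - t) ^ 5 + (1 - t) ^ 5 * (t - 1 / 2) := by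
  -- The polynomial has positive coefficients in the Bernstein basis of `[0, 1 / 2]`.
  have hbernstein (i j : ℕ) : 0 ≤ t ^ i * (1 / 2 - t) ^ j :=
    mul_nonneg (pow_nonneg ht.1 i) (pow_nonneg (sub_nonneg.2 ht.2) j)
  linarith [hbernstein 0 6, hbernstein 1 5, hbernstein 2 4, hbernstein 3 3, hbernstein 4 2,
    hbernstein 5 1, hbernstein 6 0]

theorem peanoKernel_gaussLobatto_nonneg_of_nonneg (ht : t ∈ Icc (0 : ℝ) 1) :
    0 ≤ peanoKernel gaussLobatto (-1) 1 5 t := by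
  suffices 0 ≤ 720 * peanoKernel gaussLobatto (-1) 1 5 t by linarith
  rw [peanoKernel_gaussLobatto ht]
  rcases le_total (1 / 2) t with h | h
  · have hlast : 0 ≤ (1 - t) ^ 5 * (t - 1 / 2) :=
      mul_nonneg (pow_nonneg (sub_nonneg.2 ht.2) 5) (sub_nonneg.2 h)
    positivity
  · have hmax {c d : ℝ} (hcd : c ≤ d) : (c - t) ^ 5 ≤ max (d - t) 0 ^ 5 :=
      (Odd.pow_le_pow (by decide)).2 ((sub_le_sub_right hcd t).trans (le_max_left _ _))
    have hG : (17 : ℝ) / 22 ≤ √15 / 5 := by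
      linarith [Real.le_sqrt_of_sq_le (show (85 / 22 : ℝ) ^ 2 ≤ 15 by norm_num)]
    have hL : (4 : ℝ) / 9 ≤ √5 / 5 := by
      linarith [Real.le_sqrt_of_sq_le (show (20 / 9 : ℝ) ^ 2 ≤ 5 by norm_num)]
    linarith [peanoKernel_gaussLobatto_minorant_nonneg ⟨ht.1, h⟩, hmax hG, hmax hL]

theorem peanoKernel_gaussLobatto_nonneg (ht : t ∈ Icc (-1 : ℝ) 1) :
    0 ≤ peanoKernel gaussLobatto (-1) 1 5 t := by
  rcases le_total 0 t with h | h
  · exact peanoKernel_gaussLobatto_nonneg_of_nonneg ⟨h, ht.2⟩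
  · rw [← peanoKernel_neg (by decide) mapDomain_neg_gaussLobatto isExactOfDegree_gaussLobatto]
    exact peanoKernel_gaussLobatto_nonneg_of_nonneg ⟨neg_nonneg.2 h, neg_le.1 ht.1⟩

end

theorem error_gauss3_lobatto4 (f : ℝ → ℝ) (hf : ContDiffOn ℝ 6 f (Set.Icc (-1:ℝ) 1)) :
    ∃ ξ ∈ Set.Icc (-1:ℝ) 1,
      (∫ t in (-1:ℝ)..1, f t) =
        (1 / 2) * ((5 / 9) * f (-(Real.sqrt 15) / 5) + (8 / 9) * f 0 +
          (5 / 9) * f (Real.sqrt 15 / 5)) +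
        (1 / 2) * ((1 / 6) * f (-1) + (5 / 6) * f (-(Real.sqrt 5) / 5) +
          (5 / 6) * f (Real.sqrt 5 / 5) + (1 / 6) * f 1) -
        iteratedDerivWithin 6 f (Set.Icc (-1:ℝ) 1) ξ / 94500 := by
  obtain ⟨ξ, hξ, herror⟩ :=
    isExactOfDegree_gaussLobatto.exists_quadratureError_eq_iteratedDerivWithin
      (by norm_num) (by norm_num) gaussLobatto_mem_supported
      (fun _ => peanoKernel_gaussLobatto_nonneg) hf
  refine ⟨ξ, hξ, ?_⟩
  have hconst : (4 / 525 : ℝ) / (5 + 1).factorial = 1 / 94500 := by norm_num [Nat.factorial]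
  rw [quadratureError_gaussLobatto_pow_six, hconst, quadratureError,
    linearCombination_gaussLobatto] at herror
  linarith
end

section
/- If f ∈ C⁶[−1,1] with f⁽⁶⁾ ≥ 0 on [−1,1], then (1/2)[(5/9)f(−√15/5) + (8/9)f(0) + (5/9)f(√15/5)] + (1/2)[(1/6)f(−1) + (5/6)f(−√5/5) + (5/6)f(√5/5) + (1/6)f(1)] ≥ ∫₋₁¹ f(t) dt. -/
/-!
The error of a quadrature rule that is exact on polynomials of degree at most `n` is unchanged when
the Taylor polynomial of degree `n` is subtracted from the integrand. Writing the remainder with the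
truncated powers `(x - t)⁺ ^ n / n!` and exchanging the error functional with the integral over `t`
gives Peano's formula: the error is the integral of `K(t) f⁽ⁿ⁺¹⁾(t)`, where `K(t)` is the error at
the truncated power. Here both rules are exact up to degree `5`, so it remains to see that the
kernel of their average is nonnegative. Both rules are symmetric, hence `K` is even, and on `[0, 1]`
it is an explicit piecewise polynomial.
-/

open MeasureTheory Polynomial Set
open scoped Interval Nat

section Taylor

variable {F : Type*} [NormedAddCommGroup F] [NormedSpace ℝ F]

theorem iteratedDerivWithin_of_subset {f : ℝ → F} {s t : Set ℝ} {n : ℕ} {x : ℝ} (hst : s ⊆ t)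
    (hs : UniqueDiffOn ℝ s) (ht : UniqueDiffOn ℝ t) (hf : ContDiffOn ℝ n f t) (hx : x ∈ s) :
    iteratedDerivWithin n f s x = iteratedDerivWithin n f t x := by
  simp only [iteratedDerivWithin_eq_iteratedFDerivWithin,
    iteratedFDerivWithin_subset hst hs ht hf hx]

theorem taylor_integral_remainder_of_uIcc_subset [CompleteSpace F] {f : ℝ → F} {s : Set ℝ}
    {n : ℕ} {x₀ x : ℝ} (hs : UniqueDiffOn ℝ s) (hsub : [[x₀, x]] ⊆ s)
    (hf : ContDiffOn ℝ (n + 1 : ℕ) f s) :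
    f x - taylorWithinEval f n s x₀ x =
      ∫ t in x₀..x, ((x - t) ^ n / n !) • iteratedDerivWithin (n + 1) f s t := by
  obtain rfl | hne := eq_or_ne x₀ x
  · simp
  have hderiv {k : ℕ} (hk : k ≤ n + 1) {t : ℝ} (ht : t ∈ [[x₀, x]]) :
      iteratedDerivWithin k f [[x₀, x]] t = iteratedDerivWithin k f s t :=
    iteratedDerivWithin_of_subset hsub (uniqueDiffOn_uIcc hne) hs (hf.of_le (mod_cast hk)) ht
  have hpoly : taylorWithinEval f n s x₀ x = taylorWithinEval f n [[x₀, x]] x₀ x := by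
    rw [taylor_within_apply, taylor_within_apply]
    refine Finset.sum_congr rfl fun k hk => ?_
    rw [hderiv (Finset.mem_range.1 hk).le left_mem_uIcc]
  rw [hpoly, taylor_integral_remainder (hf.mono hsub)]
  refine intervalIntegral.integral_congr fun t ht => ?_
  simp only [hderiv le_rfl ht]

end Taylor

section TruncatedPower

variable {n : ℕ} {a b x t : ℝ}

theorem continuous_posPart_sub_pow (n : ℕ) :
    Continuous fun p : ℝ × ℝ => (p.1 - p.2)⁺ ^ n :=
  (continuous_posPart.comp (continuous_fst.sub continuous_snd)).pow n

theorem posPart_sub_pow_of_le (h : t ≤ x) : (x - t)⁺ ^ n = (x - t) ^ n := by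
  rw [posPart_of_nonneg (sub_nonneg.2 h)]

theorem posPart_sub_pow_eq_zero (hn : n ≠ 0) (h : x ≤ t) : (x - t)⁺ ^ n = 0 := by
  rw [posPart_of_nonpos (sub_nonpos.2 h), zero_pow hn]

theorem posPart_sub_pow_add (hn : n ≠ 0) (x t : ℝ) :
    (x - t)⁺ ^ n + (-1) ^ n * (t - x)⁺ ^ n = (x - t) ^ n := by
  rcases le_total t x with h | h
  · rw [posPart_sub_pow_of_le h, posPart_sub_pow_eq_zero hn h, mul_zero, add_zero]
  · rw [posPart_sub_pow_of_le h, posPart_sub_pow_eq_zero hn h, zero_add, ← mul_pow,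
      neg_one_mul, neg_sub]

theorem integral_posPart_sub_pow (hn : n ≠ 0) (ht : t ∈ Icc a b) :
    ∫ x in a..b, (x - t)⁺ ^ n = (b - t) ^ (n + 1) / (n + 1) := by
  calc
    ∫ x in a..b, (x - t)⁺ ^ n = ∫ x in t..b, (x - t)⁺ ^ n := by
      rw [intervalIntegral.integral_of_le (ht.1.trans ht.2), intervalIntegral.integral_of_le ht.2]
      exact setIntegral_eq_of_subset_of_forall_sdiff_eq_zero measurableSet_Ioc
        (Ioc_subset_Ioc_left ht.1) fun x hx =>
          posPart_sub_pow_eq_zero hn (not_lt.1 fun h => hx.2 ⟨h, hx.1.2⟩)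
    _ = ∫ x in t..b, (x - t) ^ n := by
      refine intervalIntegral.integral_congr fun x hx => ?_
      exact posPart_sub_pow_of_le (uIcc_of_le ht.2 ▸ hx).1
    _ = (b - t) ^ (n + 1) / (n + 1) := by
      simp only [intervalIntegral.integral_comp_sub_right (fun y => y ^ n), sub_self, integral_pow,
        zero_pow n.succ_ne_zero, sub_zero]

variable {F : Type*} [NormedAddCommGroup F] [NormedSpace ℝ F]

theorem integral_posPart_sub_pow_smul (hn : n ≠ 0) (hx : x ∈ Icc a b) (g : ℝ → F) :
    ∫ t in a..b, (x - t)⁺ ^ n • g t = ∫ t in a..x, (x - t) ^ n • g t := by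
  calc
    ∫ t in a..b, (x - t)⁺ ^ n • g t = ∫ t in a..x, (x - t)⁺ ^ n • g t := by
      rw [intervalIntegral.integral_of_le (hx.1.trans hx.2), intervalIntegral.integral_of_le hx.1]
      refine setIntegral_eq_of_subset_of_forall_sdiff_eq_zero measurableSet_Ioc
        (Ioc_subset_Ioc_right hx.2) fun t ht => ?_
      rw [posPart_sub_pow_eq_zero hn (not_lt.1 fun h => ht.2 ⟨ht.1.1, h.le⟩), zero_smul]
    _ = ∫ t in a..x, (x - t) ^ n • g t := by
      refine intervalIntegral.integral_congr fun t ht => ?_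
      simp only [posPart_sub_pow_of_le (uIcc_of_le hx.1 ▸ ht).2]

theorem taylor_integral_remainder_posPart [CompleteSpace F] {f : ℝ → F} (hn : n ≠ 0) (hab : a < b)
    (hf : ContDiffOn ℝ (n + 1 : ℕ) f (Icc a b)) (hx : x ∈ Icc a b) :
    f x = taylorWithinEval f n (Icc a b) a x +
      ∫ t in a..b, ((x - t)⁺ ^ n / n !) • iteratedDerivWithin (n + 1) f (Icc a b) t := by
  have hsub : [[a, x]] ⊆ Icc a b := uIcc_subset_Icc (left_mem_Icc.2 hab.le) hx
  rw [← sub_eq_iff_eq_add',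
    taylor_integral_remainder_of_uIcc_subset (uniqueDiffOn_Icc hab) hsub hf]
  simp only [div_eq_mul_inv, mul_smul, integral_posPart_sub_pow_smul hn hx]

end TruncatedPower

/-- A quadrature rule `f ↦ ∑ᵢ wᵢ f(xᵢ)` on the real line, encoded as the finitely supported
function sending each node `xᵢ` to its weight `wᵢ`. -/
abbrev QuadratureRule := ℝ →₀ ℝ

namespace QuadratureRule

variable {F : Type*} [NormedAddCommGroup F] [NormedSpace ℝ F]

/-- The value `∑ᵢ wᵢ f(xᵢ)` of a quadrature rule at `f`. -/
noncomputable def eval (Q : QuadratureRule) (f : ℝ → F) : F :=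
  Finsupp.linearCombination ℝ f Q

/-- The error of a quadrature rule on `[a, b]`, with the sign convention rule minus integral. -/
noncomputable def error (Q : QuadratureRule) (a b : ℝ) (f : ℝ → F) : F :=
  Q.eval f - ∫ x in a..b, f x

/-- A quadrature rule is exact to degree `n` on `[a, b]` if it integrates every polynomial of degree
at most `n` without error. -/
def IsExact (Q : QuadratureRule) (a b : ℝ) (n : ℕ) : Prop :=
  ∀ p : ℝ[X], p.natDegree ≤ n → Q.error a b (fun x => p.eval x) = 0

/-- The Peano kernel of order `n` of a quadrature rule on `[a, b]`: its error at the truncated power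
`(x - t)₊ⁿ / n!` as a function of `t`. For `n = 0` this is not the classical kernel, since
`0 ^ 0 = 1` makes the truncated power constant. -/
noncomputable def peanoKernel (Q : QuadratureRule) (a b : ℝ) (n : ℕ) (t : ℝ) : ℝ :=
  Q.error a b fun x => (x - t)⁺ ^ n / n !

variable {Q : QuadratureRule} {a b : ℝ} {n : ℕ}

theorem eval_eq_sum (f : ℝ → F) : Q.eval f = ∑ x ∈ Q.support, Q x • f x := rfl

theorem eval_single (x w : ℝ) (f : ℝ → F) : eval (.single x w) f = w • f x :=
  Finsupp.linearCombination_single ..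

theorem eval_add (Q R : QuadratureRule) (f : ℝ → F) : (Q + R).eval f = Q.eval f + R.eval f :=
  map_add ..

theorem eval_smul (c : ℝ) (Q : QuadratureRule) (f : ℝ → F) : (c • Q).eval f = c • Q.eval f :=
  map_smul ..

theorem error_congr (hab : a ≤ b) (hQ : Q ∈ Finsupp.supported ℝ ℝ (Icc a b)) {f g : ℝ → F}
    (hfg : EqOn f g (Icc a b)) : Q.error a b f = Q.error a b g := by
  have heval : Q.eval f = Q.eval g := by
    rw [eval_eq_sum, eval_eq_sum]
    exact Finset.sum_congr rfl fun x hx => by rw [hfg (hQ hx)]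
  rw [error, error, heval, intervalIntegral.integral_congr (by rwa [uIcc_of_le hab])]

theorem error_add {f g : ℝ → F} (hf : IntervalIntegrable f volume a b)
    (hg : IntervalIntegrable g volume a b) :
    Q.error a b (fun x => f x + g x) = Q.error a b f + Q.error a b g := by
  simp only [error, eval_eq_sum, smul_add, Finset.sum_add_distrib,
    intervalIntegral.integral_add hf hg, add_sub_add_comm]

theorem error_sum {ι : Type*} {s : Finset ι} {f : ι → ℝ → F}
    (hf : ∀ i ∈ s, IntervalIntegrable (f i) volume a b) :
    Q.error a b (fun x => ∑ i ∈ s, f i x) = ∑ i ∈ s, Q.error a b (f i) := by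
  simp only [error, eval_eq_sum, Finset.smul_sum, intervalIntegral.integral_finsetSum hf,
    Finset.sum_sub_distrib]
  rw [Finset.sum_comm]

theorem error_smul_const [CompleteSpace F] (g : ℝ → ℝ) (c : F) :
    Q.error a b (fun x => g x • c) = Q.error a b g • c := by
  simp only [error, eval_eq_sum, smul_eq_mul, sub_smul, Finset.sum_smul, mul_smul,
    intervalIntegral.integral_smul_const]

theorem error_comp_neg (hQ : Q.mapDomain Neg.neg = Q) (f : ℝ → F) :
    Q.error (-b) b (fun x => f (-x)) = Q.error (-b) b f := by
  have heval : Q.eval (fun x => f (-x)) = Q.eval f := by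
    conv_rhs => rw [← hQ]
    exact (Finsupp.linearCombination_mapDomain ..).symm
  rw [error, error, heval, intervalIntegral.integral_comp_neg, neg_neg]

theorem error_integral_smul [CompleteSpace F] {K : ℝ → ℝ → ℝ} (hK : Continuous K.uncurry)
    {g : ℝ → F} (hg : ContinuousOn g [[a, b]]) :
    Q.error a b (fun x => ∫ t in a..b, K x t • g t) =
      ∫ t in a..b, Q.error a b (K · t) • g t := by
  have hswap : ∫ x in a..b, ∫ t in a..b, K x t • g t =
      ∫ t in a..b, (∫ x in a..b, K x t) • g t := by
    have hcont : ContinuousOn (fun p : ℝ × ℝ => K p.1 p.2 • g p.2) ([[a, b]] ×ˢ [[a, b]]) :=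
      hK.continuousOn.smul (hg.comp continuousOn_snd fun p hp => hp.2)
    simp only [← intervalIntegral.integral_smul_const]
    exact intervalIntegral_intervalIntegral_swap
      ((hcont.integrableOn_compact (isCompact_uIcc.prod isCompact_uIcc)).mono_set
        (prod_mono uIoc_subset_uIcc uIoc_subset_uIcc))
  have hnode (x : ℝ) : IntervalIntegrable (fun t => Q x • K x t • g t) volume a b :=
    ((((hK.comp (.prodMk_right x)).continuousOn).smul hg).const_smul (Q x)).intervalIntegrable
  have hmean : IntervalIntegrable (fun t => (∫ x in a..b, K x t) • g t) volume a b :=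
    ((intervalIntegral.continuous_parametric_intervalIntegral_of_continuous' (f := fun t x => K x t)
      (hK.comp continuous_swap) a b).continuousOn.smul hg).intervalIntegrable
  simp only [error, eval_eq_sum, sub_smul, Finset.sum_smul, smul_assoc]
  have hsum : IntervalIntegrable (fun t => ∑ x ∈ Q.support, Q x • K x t • g t) volume a b := by
    simpa only [Finset.sum_fn] using IntervalIntegrable.sum Q.support fun x _ => hnode x
  rw [hswap, intervalIntegral.integral_sub hsum hmean,
    intervalIntegral.integral_finsetSum fun x _ => hnode x]
  simp only [intervalIntegral.integral_smul]

theorem isExact_of_forall_pow (hQ : ∀ k ≤ n, Q.error a b (fun x => x ^ k) = 0) :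
    Q.IsExact a b n := by
  intro p hp
  have hsum : (fun x => p.eval x) = fun x => ∑ k ∈ Finset.range (n + 1), x ^ k • p.coeff k := by
    funext x
    simp only [eval_eq_sum_range' (Nat.lt_succ_of_le hp), smul_eq_mul, mul_comm]
  rw [hsum, error_sum fun k _ => (by fun_prop : Continuous _).intervalIntegrable a b]
  refine Finset.sum_eq_zero fun k hk => ?_
  rw [error_smul_const, hQ k (Finset.mem_range_succ_iff.1 hk), zero_smul]

theorem IsExact.error_sub_pow_div {k : ℕ} (hQ : Q.IsExact a b n) (hk : k ≤ n) (t : ℝ) :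
    Q.error a b (fun x => (x - t) ^ k / k !) = 0 := by
  have hdeg : (C (k ! : ℝ)⁻¹ * (X - C t) ^ k).natDegree ≤ n :=
    (natDegree_C_mul_le ..).trans <| natDegree_pow_le.trans <| by
      rwa [natDegree_X_sub_C, mul_one]
  simpa only [eval_mul, eval_C, eval_pow, eval_sub, eval_X, ← div_eq_inv_mul] using hQ _ hdeg

theorem IsExact.error_taylorWithinEval [CompleteSpace F] (hQ : Q.IsExact a b n) (f : ℝ → F)
    (s : Set ℝ) (x₀ : ℝ) : Q.error a b (fun x => taylorWithinEval f n s x₀ x) = 0 := by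
  simp only [taylor_within_apply, ← div_eq_inv_mul]
  rw [error_sum fun k _ => (by fun_prop : Continuous _).intervalIntegrable a b]
  refine Finset.sum_eq_zero fun k hk => ?_
  rw [error_smul_const, hQ.error_sub_pow_div (Finset.mem_range_succ_iff.1 hk), zero_smul]

theorem IsExact.error_eq_integral_peanoKernel_smul [CompleteSpace F] (hQ : Q.IsExact a b n)
    (hn : n ≠ 0) (hab : a < b) (hsupp : Q ∈ Finsupp.supported ℝ ℝ (Icc a b)) {f : ℝ → F}
    (hf : ContDiffOn ℝ (n + 1 : ℕ) f (Icc a b)) :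
    Q.error a b f =
      ∫ t in a..b, Q.peanoKernel a b n t • iteratedDerivWithin (n + 1) f (Icc a b) t := by
  have hK : Continuous (Function.uncurry fun x t : ℝ => (x - t)⁺ ^ n / n !) :=
    (continuous_posPart_sub_pow n).div_const _
  have hderiv : ContinuousOn (iteratedDerivWithin (n + 1) f (Icc a b)) [[a, b]] := by
    rw [uIcc_of_le hab.le]
    exact hf.continuousOn_iteratedDerivWithin le_rfl (uniqueDiffOn_Icc hab)
  have hpoly : Continuous (fun x => taylorWithinEval f n (Icc a b) a x) := by
    simp only [taylor_within_apply]
    fun_prop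
  have hrem : IntervalIntegrable (fun x =>
      ∫ t in a..b, ((x - t)⁺ ^ n / n !) • iteratedDerivWithin (n + 1) f (Icc a b) t)
      volume a b := by
    refine ContinuousOn.intervalIntegrable_of_Icc hab.le <|
      (hf.continuousOn.sub hpoly.continuousOn).congr fun x hx => ?_
    exact (sub_eq_of_eq_add' (taylor_integral_remainder_posPart hn hab hf hx)).symm
  rw [error_congr hab.le hsupp fun x hx => taylor_integral_remainder_posPart hn hab hf hx,
    error_add (hpoly.intervalIntegrable a b) hrem, hQ.error_taylorWithinEval, zero_add,
    error_integral_smul hK hderiv]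
  rfl

theorem IsExact.error_nonneg (hQ : Q.IsExact a b n)
    (hn : n ≠ 0) (hab : a < b) (hsupp : Q ∈ Finsupp.supported ℝ ℝ (Icc a b))
    (hK : ∀ t ∈ Icc a b, 0 ≤ Q.peanoKernel a b n t) {f : ℝ → ℝ}
    (hf : ContDiffOn ℝ (n + 1 : ℕ) f (Icc a b))
    (hderiv : ∀ t ∈ Icc a b, 0 ≤ iteratedDerivWithin (n + 1) f (Icc a b) t) :
    0 ≤ Q.error a b f := by
  rw [hQ.error_eq_integral_peanoKernel_smul hn hab hsupp hf]
  exact intervalIntegral.integral_nonneg hab.le fun t ht => mul_nonneg (hK t ht) (hderiv t ht)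

theorem IsExact.peanoKernel_neg (hQ : Q.IsExact (-b) b n) (hn : n ≠ 0)
    (hsymm : Q.mapDomain Neg.neg = Q) (t : ℝ) :
    Q.peanoKernel (-b) b n (-t) = (-1) ^ (n + 1) * Q.peanoKernel (-b) b n t := by
  have hreflect : Q.peanoKernel (-b) b n (-t) = Q.error (-b) b fun x => (t - x)⁺ ^ n / n ! := by
    rw [peanoKernel, ← error_comp_neg hsymm]
    simp only [sub_neg_eq_add, neg_add_eq_sub]
  have hpow : (fun x => (x - t) ^ n / n !) =
      fun x => (x - t)⁺ ^ n / n ! + ((t - x)⁺ ^ n / n !) • (-1 : ℝ) ^ n := by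
    funext x
    rw [← posPart_sub_pow_add hn, add_div, mul_div_assoc, smul_eq_mul, mul_comm ((-1 : ℝ) ^ n)]
  have hleft : Continuous fun x => (x - t)⁺ ^ n / n ! :=
    ((continuous_posPart_sub_pow n).comp (.prodMk_left t)).div_const _
  have hright : Continuous fun x => ((t - x)⁺ ^ n / n !) • (-1 : ℝ) ^ n :=
    (((continuous_posPart_sub_pow n).comp (.prodMk_right t)).div_const _).smul continuous_const
  have hsum : Q.peanoKernel (-b) b n t + Q.peanoKernel (-b) b n (-t) * (-1) ^ n = 0 := by
    rw [← hQ.error_sub_pow_div le_rfl t, hpow, error_add (hleft.intervalIntegrable _ _)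
      (hright.intervalIntegrable _ _), error_smul_const, hreflect, smul_eq_mul, peanoKernel]
  have hsign : ((-1 : ℝ) ^ n) * (-1) ^ n = 1 := by rw [← mul_pow]; norm_num
  linear_combination (-1) ^ n * hsum - Q.peanoKernel (-b) b n (-t) * hsign

theorem IsExact.smul_add_smul {R : QuadratureRule} {c d : ℝ} (hQ : Q.IsExact a b n)
    (hR : R.IsExact a b n) (hcd : c + d = 1) : (c • Q + d • R).IsExact a b n := by
  intro p hp
  have hQp := hQ p hp
  have hRp := hR p hp
  simp only [error, eval_add, eval_smul, smul_eq_mul] at hQp hRp ⊢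
  linear_combination c * hQp + d * hRp + hcd * ∫ x in a..b, p.eval x

/-- The three-point Gauss–Legendre rule on `[-1, 1]`. -/
noncomputable def gauss3 : QuadratureRule :=
  .single (-√15 / 5) (5 / 9) + .single 0 (8 / 9) + .single (√15 / 5) (5 / 9)

/-- The four-point Lobatto rule on `[-1, 1]`. -/
noncomputable def lobatto4 : QuadratureRule :=
  .single (-1) (1 / 6) + .single (-√5 / 5) (5 / 6) + .single (√5 / 5) (5 / 6) + .single 1 (1 / 6)

/-- The average of the three-point Gauss–Legendre rule and the four-point Lobatto rule. -/
noncomputable def gauss3Lobatto4 : QuadratureRule :=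
  (1 / 2 : ℝ) • gauss3 + (1 / 2 : ℝ) • lobatto4

theorem eval_gauss3 (f : ℝ → ℝ) :
    gauss3.eval f = 5 / 9 * f (-√15 / 5) + 8 / 9 * f 0 + 5 / 9 * f (√15 / 5) := by
  simp only [gauss3, eval_add, eval_single, smul_eq_mul]

theorem eval_lobatto4 (f : ℝ → ℝ) :
    lobatto4.eval f =
      1 / 6 * f (-1) + 5 / 6 * f (-√5 / 5) + 5 / 6 * f (√5 / 5) + 1 / 6 * f 1 := by
  simp only [lobatto4, eval_add, eval_single, smul_eq_mul]

theorem eval_gauss3Lobatto4 (f : ℝ → ℝ) :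
    gauss3Lobatto4.eval f =
      1 / 2 * (5 / 9 * f (-√15 / 5) + 8 / 9 * f 0 + 5 / 9 * f (√15 / 5)) +
      1 / 2 * (1 / 6 * f (-1) + 5 / 6 * f (-√5 / 5) + 5 / 6 * f (√5 / 5) + 1 / 6 * f 1) := by
  simp only [gauss3Lobatto4, eval_add, eval_smul, eval_gauss3, eval_lobatto4, smul_eq_mul]

theorem isExact_gauss3 : gauss3.IsExact (-1) 1 5 := by
  have h2 : √15 ^ 2 = 15 := Real.sq_sqrt (by norm_num)
  have h4 : √15 ^ 4 = 225 := by rw [pow_mul √15 2 2, h2]; norm_num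
  refine isExact_of_forall_pow fun k hk => ?_
  interval_cases k <;>
    norm_num [error, eval_gauss3, integral_pow, neg_div, neg_pow, div_pow, h2, h4]

theorem isExact_lobatto4 : lobatto4.IsExact (-1) 1 5 := by
  have h2 : √5 ^ 2 = 5 := Real.sq_sqrt (by norm_num)
  have h4 : √5 ^ 4 = 25 := by rw [pow_mul √5 2 2, h2]; norm_num
  refine isExact_of_forall_pow fun k hk => ?_
  interval_cases k <;>
    norm_num [error, eval_lobatto4, integral_pow, neg_div, neg_pow, div_pow, h2, h4]

theorem isExact_gauss3Lobatto4 : gauss3Lobatto4.IsExact (-1) 1 5 :=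
  isExact_gauss3.smul_add_smul isExact_lobatto4 (by norm_num)

theorem gauss3_mem_supported : gauss3 ∈ Finsupp.supported ℝ ℝ (Icc (-1) 1) := by
  have h0 : 0 ≤ √15 := Real.sqrt_nonneg 15
  have h5 : √15 ≤ 5 := Real.sqrt_le_iff.2 (by norm_num)
  refine add_mem (add_mem ?_ ?_) ?_ <;> refine Finsupp.single_mem_supported _ _ ⟨?_, ?_⟩ <;>
    linarith

theorem lobatto4_mem_supported : lobatto4 ∈ Finsupp.supported ℝ ℝ (Icc (-1) 1) := by
  have h0 : 0 ≤ √5 := Real.sqrt_nonneg 5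
  have h5 : √5 ≤ 5 := Real.sqrt_le_iff.2 (by norm_num)
  refine add_mem (add_mem (add_mem ?_ ?_) ?_) ?_ <;>
    refine Finsupp.single_mem_supported _ _ ⟨?_, ?_⟩ <;> linarith

theorem gauss3Lobatto4_mem_supported :
    gauss3Lobatto4 ∈ Finsupp.supported ℝ ℝ (Icc (-1) 1) :=
  add_mem (Submodule.smul_mem _ _ gauss3_mem_supported)
    (Submodule.smul_mem _ _ lobatto4_mem_supported)

theorem mapDomain_neg_gauss3Lobatto4 : gauss3Lobatto4.mapDomain Neg.neg = gauss3Lobatto4 := by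
  simp only [gauss3Lobatto4, gauss3, lobatto4, Finsupp.mapDomain_add, Finsupp.mapDomain_smul,
    Finsupp.mapDomain_single, neg_div, neg_neg, neg_zero]
  module

theorem one_sub_pow_le_of_mem_Icc {a t : ℝ} (ha : 0.7745 ≤ a) (ht : t ∈ Icc 0.4472 (1 / 2)) :
    (1 - t) ^ 6 / 6 ≤ 5 / 18 * (a - t) ^ 5 + 1 / 12 * (1 - t) ^ 5 := by
  obtain ⟨ht₀, ht₁⟩ := ht
  -- `11 / 6` exceeds `(1 - t) / (a - t)` at `a = 0.7745`, `t = 1 / 2`, where the ratio is largest.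
  have hratio : (1 - t) ^ 5 ≤ (11 / 6 * (a - t)) ^ 5 :=
    pow_le_pow_left₀ (by linarith) (by linarith) 5
  have hfactor : (1 - t) ^ 5 * (1 - 2 * t) ≤ (11 / 6 * (a - t)) ^ 5 * 0.1056 :=
    mul_le_mul hratio (by linarith) (by linarith) (pow_nonneg (by linarith) 5)
  have hpos : 0 ≤ (a - t) ^ 5 := pow_nonneg (by linarith) 5
  linear_combination hfactor / 12 + (5 / 18 - (11 / 6) ^ 5 * 0.1056 / 12) * hpos

theorem one_sub_pow_le_of_le_sqrt {a b t : ℝ} (ha : a ^ 2 = 3 / 5) (hb : b ^ 2 = 1 / 5)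
    (ha' : 0.7745 ≤ a) (hb' : 0.4472 ≤ b) (ht₀ : 0 ≤ t) (htb : t ≤ b) :
    (1 - t) ^ 6 / 6 ≤ 5 / 18 * (a - t) ^ 5 + 5 / 12 * (b - t) ^ 5 + 1 / 12 * (1 - t) ^ 5 := by
  have hexpand : 5 / 18 * (a - t) ^ 5 + 5 / 12 * (b - t) ^ 5 + 1 / 12 * (1 - t) ^ 5
      - (1 - t) ^ 6 / 6 =
      (-1 / 12 + a / 10 + b / 60) + (-5 / 3 + 5 / 3 * a + 5 / 6 * b) * t ^ 2 +
      (-25 / 12 + 25 / 18 * a + 25 / 12 * b) * t ^ 4 + 2 / 9 * t ^ 5 - t ^ 6 / 6 := by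
    linear_combination
      (5 / 18 * (a * (a ^ 2 + 3 / 5) - 5 * t * (a ^ 2 + 3 / 5) + 10 * a * t ^ 2
        - 10 * t ^ 3)) * ha +
      (5 / 12 * (b * (b ^ 2 + 1 / 5) - 5 * t * (b ^ 2 + 1 / 5) + 10 * b * t ^ 2
        - 10 * t ^ 3)) * hb
  -- At `a = √15 / 5`, `b = √5 / 5` the coefficients of `1, t ^ 2, t ^ 4` are about
  -- `0.0016, -0.0030, -0.0758`; as `(0.0032 + 0.004) / 5 < 0.0015`, the constant absorbs the rest.
  have hconst : 0.0015 ≤ -1 / 12 + a / 10 + b / 60 := by linarith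
  have hquad : -0.0032 * t ^ 2 ≤ (-5 / 3 + 5 / 3 * a + 5 / 6 * b) * t ^ 2 :=
    mul_le_mul_of_nonneg_right (by linarith) (by positivity)
  have hquart : -0.076 * t ^ 4 ≤ (-25 / 12 + 25 / 18 * a + 25 / 12 * b) * t ^ 4 :=
    mul_le_mul_of_nonneg_right (by linarith) (by positivity)
  have hsq : t ^ 2 ≤ 1 / 5 := hb ▸ pow_le_pow_left₀ ht₀ htb 2
  have ht₁ : t ≤ 0.45 := by nlinarith
  have hcubic : 0 ≤ 0.004 - 0.076 * t ^ 2 + 0.147 * t ^ 3 := by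
    linear_combination 0.147 * mul_nonneg ht₀ (sq_nonneg (t - 0.35)) +
      0.0269 * sq_nonneg (t - 0.35) + 0.0008225 * ht₀
  have htail : -0.004 * t ^ 2 ≤ t ^ 2 * (-0.076 * t ^ 2 + 2 / 9 * t ^ 3 - t ^ 4 / 6) := by
    have hdrop : 0 ≤ t ^ 3 * (0.45 - t) := mul_nonneg (by positivity) (by linarith)
    linear_combination mul_nonneg (sq_nonneg t) hcubic + mul_nonneg (sq_nonneg t) hdrop / 6 +
      (2 / 9 - 0.222) * pow_nonneg ht₀ 5
  linear_combination hconst + hquad + hquart + htail + 0.0072 * hsq - hexpand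

theorem one_sub_pow_le_posPart {a b t : ℝ} (ha : a ^ 2 = 3 / 5) (hb : b ^ 2 = 1 / 5)
    (ha' : 0.7745 ≤ a) (hb' : 0.4472 ≤ b) (ht : t ∈ Icc 0 1) :
    (1 - t) ^ 6 / 6 ≤
      5 / 18 * (a - t)⁺ ^ 5 + 5 / 12 * (b - t)⁺ ^ 5 + 1 / 12 * (1 - t) ^ 5 := by
  have hA : 0 ≤ (a - t)⁺ ^ 5 := by positivity
  have hB : 0 ≤ (b - t)⁺ ^ 5 := by positivity
  rcases le_total (1 / 2) t with hhalf | hhalf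
  · have hpos : 0 ≤ (1 - t) ^ 5 * (2 * t - 1) :=
      mul_nonneg (pow_nonneg (sub_nonneg.2 ht.2) 5) (by linarith)
    linear_combination hpos / 12 + 5 / 18 * hA + 5 / 12 * hB
  rw [posPart_sub_pow_of_le (by linarith : t ≤ a)]
  rcases le_total b t with hbt | hbt
  · linear_combination one_sub_pow_le_of_mem_Icc ha' ⟨hb'.trans hbt, hhalf⟩ + 5 / 12 * hB
  · rw [posPart_sub_pow_of_le hbt]
    exact one_sub_pow_le_of_le_sqrt ha hb ha' hb' ht.1 hbt

theorem peanoKernel_gauss3Lobatto4 {t : ℝ} (ht : t ∈ Icc 0 1) :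
    gauss3Lobatto4.peanoKernel (-1) 1 5 t =
      (5 / 18 * (√15 / 5 - t)⁺ ^ 5 + 5 / 12 * (√5 / 5 - t)⁺ ^ 5 + 1 / 12 * (1 - t) ^ 5
        - (1 - t) ^ 6 / 6) / 5 ! := by
  have hzero {x : ℝ} (hx : x ≤ 0) : (x - t)⁺ ^ 5 = 0 :=
    posPart_sub_pow_eq_zero (by norm_num) (hx.trans ht.1)
  have hsqrt (r : ℝ) : -√r / 5 ≤ 0 :=
    div_nonpos_of_nonpos_of_nonneg (neg_nonpos.2 (Real.sqrt_nonneg r)) (by norm_num)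
  rw [peanoKernel, error, eval_gauss3Lobatto4, intervalIntegral.integral_div,
    integral_posPart_sub_pow (by norm_num) ⟨by linarith [ht.1], ht.2⟩,
    posPart_sub_pow_of_le ht.2, hzero le_rfl, hzero (by norm_num : (-1 : ℝ) ≤ 0),
    hzero (hsqrt 15), hzero (hsqrt 5)]
  push_cast
  ring

theorem peanoKernel_gauss3Lobatto4_nonneg {t : ℝ} (ht : t ∈ Icc (-1) 1) :
    0 ≤ gauss3Lobatto4.peanoKernel (-1) 1 5 t := by
  wlog h0 : 0 ≤ t generalizing t
  · have hneg := this (t := -t) ⟨by linarith [ht.2], by linarith [ht.1]⟩ (by linarith)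
    rw [isExact_gauss3Lobatto4.peanoKernel_neg (by norm_num) mapDomain_neg_gauss3Lobatto4,
      Even.neg_one_pow (by decide), one_mul] at hneg
    exact hneg
  rw [peanoKernel_gauss3Lobatto4 ⟨h0, ht.2⟩]
  have h15 : √15 ^ 2 = 15 := Real.sq_sqrt (by norm_num)
  have h5 : √5 ^ 2 = 5 := Real.sq_sqrt (by norm_num)
  have h15' : 3.8725 ≤ √15 := Real.le_sqrt_of_sq_le (by norm_num)
  have h5' : 2.236 ≤ √5 := Real.le_sqrt_of_sq_le (by norm_num)
  refine div_nonneg (sub_nonneg.2 ?_) (Nat.cast_nonneg _)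
  exact one_sub_pow_le_posPart (by rw [div_pow, h15]; norm_num) (by rw [div_pow, h5]; norm_num)
    (by linarith) (by linarith) ⟨h0, ht.2⟩

end QuadratureRule

theorem gauss3_lobatto4_average_ge_integral (f : ℝ → ℝ)
    (hf : ContDiffOn ℝ 6 f (Set.Icc (-1:ℝ) 1))
    (h6 : ∀ x ∈ Set.Icc (-1:ℝ) 1, 0 ≤ iteratedDerivWithin 6 f (Set.Icc (-1:ℝ) 1) x) :
    (∫ t in (-1:ℝ)..1, f t) ≤
      (1 / 2) * ((5 / 9) * f (-(Real.sqrt 15) / 5) + (8 / 9) * f 0 +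
        (5 / 9) * f (Real.sqrt 15 / 5)) +
      (1 / 2) * ((1 / 6) * f (-1) + (5 / 6) * f (-(Real.sqrt 5) / 5) +
        (5 / 6) * f (Real.sqrt 5 / 5) + (1 / 6) * f 1) := by
  have hf' : ContDiffOn ℝ (5 + 1 : ℕ) f (Icc (-1) 1) := mod_cast hf
  have herror : 0 ≤ QuadratureRule.gauss3Lobatto4.error (-1) 1 f :=
    QuadratureRule.isExact_gauss3Lobatto4.error_nonneg (by norm_num) (by norm_num)
      QuadratureRule.gauss3Lobatto4_mem_supported
      (fun _ ht => QuadratureRule.peanoKernel_gauss3Lobatto4_nonneg ht) hf' h6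
  rwa [QuadratureRule.error, QuadratureRule.eval_gauss3Lobatto4, sub_nonneg] at herror
end
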